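/- arXiv:1811.06413 — 2 statements merged into one kernel-verified Lean document; each statement's English description precedes it below -/
import Mathlib

section
/- Let S be a graded reduced affine monoid with atoms 𝒜(S) = {a₁,…,a_n}, let ≺ be an admissible total order on the free commutative monoid M on {x_a : a ∈ 𝒜(S)} with x_{a₁} ≺ … ≺ x_{a_n}, and let ≺ be extended to the free commutative monoid M̃ on {x_{a[i]} : a[i] ∈ 𝒜(S̃)} as described below. Suppose {(x^λ, x^μ) : (λ,μ) ∈ Λ} is a Gröbner system of ∼_S. Then Γ₁ ∪ Γ₂ ∪ Γ₃ is a Gröbner system of ∼_{S̃}, where Γ₁ = {(x^λ, x^μ) : (κ(λ), κ(μ)) ∈ Λ and δ(λ) = δ(μ)}, Γ₂ = {(x_{a[i]} x_{b[j]}, x_{a[i−1]} x_{b[j+1]}) : a, b ∈ 𝒜(S), x_a ≺ x_b, 0 < i ≤ |a|, 0 ≤ j < |b|}, and Γ₃ = {(x_{a[i]} x_{a[j]}, x_{a[i−1]} x_{a[j+1]}) : a ∈ 𝒜(S), 0 < i ≤ j < |a|}. -/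
/-!
Membership in `Γ₁ ∪ Γ₂ ∪ Γ₃` visibly respects the congruence and the order, and the three sets are
finite because there are finitely many `a[i]` and the fibres of `κ` are finite. The content is that
a `z` divisible by no leading term is minimal in its class.

* Reduction to a fibre of `κ`. If `κ(z)` were divisible by the leading term `α` of some
  `(α, β) ∈ Λ`, a divisor `l'` of `z` with `κ(l') = α` exists (`kap_lift_divisor`). As
  `δ(l') ≤ |a^α| = |a^β|` (`delt_le`), and every value in `[0, |a^β|]` is `δ` of something over `β`
  (`exists_kap_delt`), `l'` would be a leading term of `Γ₁`. So `κ(z)` is minimal for `∼_S`, and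
  only `y ∼ z` with `κ(y) = κ(z)` needs attention.
* Inside a fibre (`fibre_minimal`). Suppose `κ(y) = κ(z)`, `δ(y) = δ(z)` and at the first position
  `p = a[i]` where they differ `y(p) > z(p)`. The codegree `Σ_q l(q) (|q| - i(q))`, where
  `q = b[i(q)]` and `|q| = |b|`, is determined by `κ` and `δ`, so it agrees on `y` and `z`. As `z`
  must contain some `a[i']` with `i' > i`, avoiding `Γ₂` forces `z(b[j]) = 0` for every later atom
  `b` and `j < |b|`; avoiding `Γ₃` leaves at most one factor `a[j]` of `z` with `i < j < |a|`.
  Hence the excess `z - y` is positive at no more than one position of positive codegree, where it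
  is at most `1`; the codegree there is smaller than that of `p`, where `z - y ≤ -1`. So the
  codegree of `z` is strictly smaller than that of `y`, a contradiction.
-/

/-! ## Common definitions: atoms, factorizations, catenary degrees -/

/-- An atom of an additive commutative monoid: a nonzero element that cannot be
written as a sum of two nonzero elements. -/
def IsAtm {S : Type*} [AddCommMonoid S] (a : S) : Prop :=
  a ≠ 0 ∧ ∀ b c : S, a = b + c → b = 0 ∨ c = 0

/-- The set of atoms of an additive commutative monoid. -/
def Atoms (S : Type*) [AddCommMonoid S] : Set S := {a | IsAtm a}

/-- Exponent vectors: the free commutative monoid on the set of atoms (written additively). -/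
abbrev FreeExp (S : Type*) [AddCommMonoid S] := ↥(Atoms S) →₀ ℕ

/-- The factorization homomorphism, sending an exponent vector `α` to `a^α ∈ S`. -/
def fac {S : Type*} [AddCommMonoid S] (α : FreeExp S) : S :=
  α.sum fun a n => n • (a : S)

lemma fac_add {S : Type*} [AddCommMonoid S] (α β : FreeExp S) :
    fac (α + β) = fac α + fac β :=
  Finsupp.sum_add_index' (fun _ => zero_nsmul _) (fun a m n => add_nsmul (a : S) m n)

/-- Total degree (length) `|α|` of an exponent vector. -/
def degE {σ : Type*} (α : σ →₀ ℕ) : ℕ := α.sum fun _ n => n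

/-- Pointwise minimum (the gcd in the free commutative monoid). -/
noncomputable def gcdE {σ : Type*} (α β : σ →₀ ℕ) : σ →₀ ℕ :=
  Finsupp.zipWith min (min_self 0) α β

/-- The distance `d(α,γ)` between two exponent vectors. -/
noncomputable def dDist {σ : Type*} (α β : σ →₀ ℕ) : ℕ :=
  max (degE (α - gcdE α β)) (degE (β - gcdE α β))

/-- `α` and `γ` can be connected by a `d`-chain. -/
def ChainConn {S : Type*} [AddCommMonoid S] (d : ℕ) (α γ : FreeExp S) : Prop :=
  ∃ (k : ℕ) (c : ℕ → FreeExp S), c 0 = α ∧ c k = γ ∧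
    ∀ j < k, fac (c j) = fac (c (j + 1)) ∧ dDist (c j) (c (j + 1)) ≤ d

/-- The catenary degree of `S`. -/
noncomputable def catDeg (S : Type*) [AddCommMonoid S] : ℕ :=
  sInf {d | ∀ α γ : FreeExp S, fac α = fac γ → ChainConn d α γ}

/-- Graded degree `|α|_gr` of an exponent vector, w.r.t. a weight (grading) `w` on `S`. -/
def gdegE {S : Type*} [AddCommMonoid S] (w : S → ℕ) (α : FreeExp S) : ℕ :=
  α.sum fun a n => n * w (a : S)

/-- The graded distance `d_gr(α,γ)`. -/
noncomputable def dDistGr {S : Type*} [AddCommMonoid S] (w : S → ℕ) (α β : FreeExp S) : ℕ :=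
  max (gdegE w (α - gcdE α β)) (gdegE w (β - gcdE α β))

/-- `α` and `γ` can be connected by a chain of weight at most `d`. -/
def ChainConnGr {S : Type*} [AddCommMonoid S] (w : S → ℕ) (d : ℕ) (α γ : FreeExp S) : Prop :=
  ∃ (k : ℕ) (c : ℕ → FreeExp S), c 0 = α ∧ c k = γ ∧
    ∀ j < k, fac (c j) = fac (c (j + 1)) ∧ dDistGr w (c j) (c (j + 1)) ≤ d

/-- The graded catenary degree of `S` w.r.t. the grading `w`. -/
noncomputable def catDegGr (S : Type*) [AddCommMonoid S] (w : S → ℕ) : ℕ :=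
  sInf {d | ∀ α γ : FreeExp S, fac α = fac γ → ChainConnGr w d α γ}

/-- The defining congruence `∼_S` of `S` on the free commutative monoid on the atoms. -/
def defCon (S : Type*) [AddCommMonoid S] : AddCon (FreeExp S) where
  r α β := fac α = fac β
  iseqv := ⟨fun _ => rfl, Eq.symm, Eq.trans⟩
  add' := fun {a b c d} h1 h2 => by
    have h1' : fac a = fac b := h1
    have h2' : fac c = fac d := h2
    show fac (a + c) = fac (b + d)
    rw [fac_add, fac_add, h1', h2']

/-- A reduced affine monoid: commutative, cancellative, a finitely generated monoid embedding
into a finitely generated free abelian group, whose only unit is the identity. -/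
class IsReducedAffine (S : Type*) [AddCommMonoid S] : Prop where
  cancel : ∀ a b c : S, a + b = a + c → b = c
  affine : ∃ (k : ℕ) (f : S →+ (Fin k → ℤ)), Function.Injective f
  fg : AddMonoid.FG S
  reduced : ∀ s : S, IsAddUnit s → s = 0

/-! ## The tilde construction -/

/-- The atoms of `S̃`: pairs `a[i]` with `a` an atom of `S` and `0 ≤ i ≤ |a|`. -/
def ATil (S : Type*) [AddCommMonoid S] (w : S → ℕ) : Type _ :=
  {p : ↥(Atoms S) × ℕ // p.2 ≤ w (p.1 : S)}

/-- Constructor `a[i]` for atoms of `S̃`. -/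
def atil {S : Type*} [AddCommMonoid S] (w : S → ℕ) (a : ↥(Atoms S)) (i : ℕ)
    (h : i ≤ w (a : S)) : ATil S w := ⟨(a, i), h⟩

/-- The map `κ : ℕ₀^{𝒜(S̃)} → ℕ₀^{𝒜(S)}`, `κ(λ)(a) = Σ_i λ(a[i])`. -/
noncomputable def kap (S : Type*) [AddCommMonoid S] (w : S → ℕ) :
    (ATil S w →₀ ℕ) → FreeExp S :=
  Finsupp.mapDomain fun p => p.val.1

/-- The map `δ : ℕ₀^{𝒜(S̃)} → ℕ₀`, `δ(λ) = Σ i·λ(a[i])`. -/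
def delt {S : Type*} [AddCommMonoid S] (w : S → ℕ) (l : ATil S w →₀ ℕ) : ℕ :=
  l.sum fun p n => n * p.val.2

lemma kap_add {S : Type*} [AddCommMonoid S] (w : S → ℕ) (l m : ATil S w →₀ ℕ) :
    kap S w (l + m) = kap S w l + kap S w m := Finsupp.mapDomain_add

lemma delt_add {S : Type*} [AddCommMonoid S] (w : S → ℕ) (l m : ATil S w →₀ ℕ) :
    delt w (l + m) = delt w l + delt w m :=
  Finsupp.sum_add_index' (fun _ => zero_mul _) (fun _ m n => add_mul m n _)

/-- The defining congruence of `S̃` (under the identification `𝒜(S̃) = {a[i]}`,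
`x^λ ∼_{S̃} x^μ` iff `a^{κλ} = a^{κμ}` in `S` and `δλ = δμ`). -/
def defConTil (S : Type*) [AddCommMonoid S] (w : S → ℕ) : AddCon (ATil S w →₀ ℕ) where
  r l m := fac (kap S w l) = fac (kap S w m) ∧ delt w l = delt w m
  iseqv := ⟨fun _ => ⟨rfl, rfl⟩, fun h => ⟨h.1.symm, h.2.symm⟩,
    fun h h' => ⟨h.1.trans h'.1, h.2.trans h'.2⟩⟩
  add' := fun h1 h2 =>
    ⟨by rw [kap_add, kap_add, fac_add, fac_add, h1.1, h2.1],
     by rw [delt_add, delt_add, h1.2, h2.2]⟩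

/-- The quadratic relations `(x_{a[k]} x_{b[l]}, x_{a[k+1]} x_{b[l-1]})`,
for `a, b ∈ 𝒜(S)`, `0 ≤ k ≤ |a| - 1`, `1 ≤ l ≤ |b|`. -/
def quadRel (S : Type*) [AddCommMonoid S] (w : S → ℕ) :
    (ATil S w →₀ ℕ) → (ATil S w →₀ ℕ) → Prop := fun x y =>
  ∃ (a b : ↥(Atoms S)) (k l : ℕ) (hk : k + 1 ≤ w (a : S)) (_ : 1 ≤ l) (hl : l ≤ w (b : S)),
    x = Finsupp.single (atil w a k (Nat.le_of_succ_le hk)) 1 +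
        Finsupp.single (atil w b l hl) 1 ∧
    y = Finsupp.single (atil w a (k + 1) hk) 1 +
        Finsupp.single (atil w b (l - 1) (le_trans (Nat.sub_le l 1) hl)) 1

/-! ## Block monoids -/

/-- The block monoid `ℬ(g)` of a tuple `g = (g₁,…,g_m)` of elements of a commutative
monoid `G`. -/
def BlockT {G : Type*} [CommMonoid G] {m : ℕ} (g : Fin m → G) :
    AddSubmonoid (Fin m → ℕ) where
  carrier := {α | ∏ i, g i ^ α i = 1}
  zero_mem' := by simp
  add_mem' := by
    intro a b ha hb
    simp only [Set.mem_setOf_eq] at *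
    show ∏ i, g i ^ (a i + b i) = 1
    simp [pow_add, Finset.prod_mul_distrib, ha, hb]

/-- The block monoid `ℬ(G₀)` of a subset `G₀` of a commutative monoid `G`. -/
noncomputable def BlockS {G : Type*} [CommMonoid G] (G₀ : Set G) : AddSubmonoid (G₀ →₀ ℕ) where
  carrier := {α | (α.prod fun x n => (x : G) ^ n) = 1}
  zero_mem' := by simp
  add_mem' := by
    intro a b ha hb
    simp only [Set.mem_setOf_eq] at *
    rw [Finsupp.prod_add_index' (fun x => pow_zero _) (fun x m n => pow_add _ m n), ha, hb,
      one_mul]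

/-- The monoid `S̃` for `S = ℬ(g)` graded by the last coordinate. -/
def TildeB {G : Type*} [CommMonoid G] {m : ℕ} (g : Fin (m + 1) → G) :
    AddSubmonoid ((Fin (m + 1) → ℕ) × ℕ) where
  carrier := {p | p.1 ∈ BlockT g ∧ p.2 ≤ p.1 (Fin.last m)}
  zero_mem' := ⟨(BlockT g).zero_mem, le_rfl⟩
  add_mem' := by
    intro a b ha hb
    exact ⟨(BlockT g).add_mem ha.1 hb.1, add_le_add ha.2 hb.2⟩

/-- The Davenport constant `D(G₀)`: the maximal length of an atom of `ℬ(G₀)`. -/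
noncomputable def DavenportC {G : Type*} [CommMonoid G] (G₀ : Set G) : ℕ :=
  sSup {k | ∃ γ : ↥(BlockS G₀), IsAtm γ ∧ degE (γ : G₀ →₀ ℕ) = k}

/-- The little Davenport constant `d(G₀)`: the maximal length of a sequence over `G₀`
containing no product-one subsequence. -/
noncomputable def littleDav {G : Type*} [CommMonoid G] (G₀ : Set G) : ℕ :=
  sSup {k | ∃ α : G₀ →₀ ℕ, degE α = k ∧
    ∀ γ : ↥(BlockS G₀), IsAtm γ → ∃ x : G₀, α x < (γ : G₀ →₀ ℕ) x}

/-! ## Gröbner systems -/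

/-- An admissible total order (given as a strict order relation) on a free commutative
monoid, written additively. -/
def IsAdmissible {F : Type*} [AddCommMonoid F] (lt : F → F → Prop) : Prop :=
  (∀ x y, lt x y ∨ x = y ∨ lt y x) ∧ (∀ x y z, lt x y → lt y z → lt x z) ∧
  (∀ x, ¬ lt x x) ∧ (∀ x y z, lt x y → lt (x + z) (y + z)) ∧ (∀ x, x ≠ 0 → lt 0 x)

/-- `Λ` is a Gröbner system of the congruence `c` with respect to the order `lt`. -/
def IsGroebnerSystem {F : Type*} [AddCommMonoid F] (lt : F → F → Prop) (c : AddCon F)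
    (Λ : Set (F × F)) : Prop :=
  Λ.Finite ∧ (∀ p ∈ Λ, c p.1 p.2 ∧ lt p.2 p.1) ∧
  (∀ z : F, (∀ p ∈ Λ, ¬ ∃ u, z = p.1 + u) → ∀ y, c z y → z = y ∨ lt z y)

/-- The ordering on positions `a[i]` induced by an enumeration of the atoms. -/
def posLt {S : Type*} [AddCommMonoid S] {w : S → ℕ} {n : ℕ} (e : Fin n ≃ ↥(Atoms S))
    (q p : ATil S w) : Prop :=
  e.symm q.val.1 < e.symm p.val.1 ∨ (e.symm q.val.1 = e.symm p.val.1 ∧ q.val.2 < p.val.2)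

/-- The admissible order on the free commutative monoid on `𝒜(S̃)` extending the order
`lt` on the free commutative monoid on `𝒜(S)`. -/
def ltTil {S : Type*} [AddCommMonoid S] (w : S → ℕ) (lt : FreeExp S → FreeExp S → Prop)
    {n : ℕ} (e : Fin n ≃ ↥(Atoms S)) (mu lam : ATil S w →₀ ℕ) : Prop :=
  lt (kap S w mu) (kap S w lam) ∨
  (kap S w mu = kap S w lam ∧
    ∃ p : ATil S w, lam p < mu p ∧ ∀ q : ATil S w, posLt e q p → mu q = lam q)

/-- The set `Γ₂` of pairs `(x_{a[i]} x_{b[j]}, x_{a[i-1]} x_{b[j+1]})` with `x_a ≺ x_b`,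
`0 < i ≤ |a|`, `0 ≤ j < |b|`. -/
def Gam2 (S : Type*) [AddCommMonoid S] (w : S → ℕ) (lt : FreeExp S → FreeExp S → Prop) :
    Set ((ATil S w →₀ ℕ) × (ATil S w →₀ ℕ)) :=
  {pr | ∃ (a b : ↥(Atoms S)) (i j : ℕ) (_ : 0 < i) (hi : i ≤ w (a : S)) (hj : j + 1 ≤ w (b : S)),
    lt (Finsupp.single a 1) (Finsupp.single b 1) ∧
    pr = (Finsupp.single (atil w a i hi) 1 +
            Finsupp.single (atil w b j (Nat.le_of_succ_le hj)) 1,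
          Finsupp.single (atil w a (i - 1) (le_trans (Nat.sub_le i 1) hi)) 1 +
            Finsupp.single (atil w b (j + 1) hj) 1)}

/-- The set `Γ₃` of pairs `(x_{a[i]} x_{a[j]}, x_{a[i-1]} x_{a[j+1]})` with `0 < i ≤ j < |a|`. -/
def Gam3 (S : Type*) [AddCommMonoid S] (w : S → ℕ) :
    Set ((ATil S w →₀ ℕ) × (ATil S w →₀ ℕ)) :=
  {pr | ∃ (a : ↥(Atoms S)) (i j : ℕ) (_ : 0 < i) (hij : i ≤ j) (hj : j + 1 ≤ w (a : S)),
    pr = (Finsupp.single (atil w a i (le_trans hij (Nat.le_of_succ_le hj))) 1 +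
            Finsupp.single (atil w a j (Nat.le_of_succ_le hj)) 1,
          Finsupp.single (atil w a (i - 1)
              (le_trans (Nat.sub_le i 1) (le_trans hij (Nat.le_of_succ_le hj)))) 1 +
            Finsupp.single (atil w a (j + 1) hj) 1)}

/-! ## The presentation homomorphism for semigroup rings -/

/-- The homomorphism `π_R : R[x_a : a ∈ 𝒜(S)] → R[S]`, `x_a ↦ a`. -/
noncomputable def piR (R : Type*) (S : Type*) [CommRing R] [AddCommMonoid S] :
    MvPolynomial ↥(Atoms S) R →ₐ[R] AddMonoidAlgebra R S :=
  MvPolynomial.aeval fun a => AddMonoidAlgebra.single (a : S) 1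

/-! ### Degrees and lifts along `κ` -/

section Lifts

variable {S : Type} [AddCommMonoid S] {w : S → ℕ}

lemma fac_zero : fac (0 : FreeExp S) = 0 := Finsupp.sum_zero_index

lemma fac_single (a : ↥(Atoms S)) (n : ℕ) : fac (Finsupp.single a n) = n • (a : S) :=
  Finsupp.sum_single_index (zero_nsmul _)

lemma kap_zero : kap S w 0 = 0 := Finsupp.mapDomain_zero

lemma kap_single (p : ATil S w) (n : ℕ) :
    kap S w (Finsupp.single p n) = Finsupp.single p.val.1 n := Finsupp.mapDomain_single

lemma delt_zero : delt w (0 : ATil S w →₀ ℕ) = 0 := Finsupp.sum_zero_index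

lemma delt_single (p : ATil S w) (n : ℕ) : delt w (Finsupp.single p n) = n * p.val.2 :=
  Finsupp.sum_single_index (zero_mul _)

lemma weight_zero (hw : ∀ s t : S, w (s + t) = w s + w t) : w 0 = 0 := by
  have := hw 0 0
  rw [add_zero] at this
  omega

lemma weight_nsmul (hw : ∀ s t : S, w (s + t) = w s + w t) (n : ℕ) (s : S) :
    w (n • s) = n * w s := by
  induction n with
  | zero => simp [weight_zero hw]
  | succ k ih => rw [succ_nsmul, hw, ih, Nat.succ_mul]

lemma delt_le (hw : ∀ s t : S, w (s + t) = w s + w t) (l : ATil S w →₀ ℕ) :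
    delt w l ≤ w (fac (kap S w l)) := by
  induction l using Finsupp.induction_linear with
  | zero => simp [delt_zero]
  | add f g hf hg => rw [delt_add, kap_add, fac_add, hw]; omega
  | single p n =>
    rw [delt_single, kap_single, fac_single, weight_nsmul hw]
    exact Nat.mul_le_mul_left _ p.2

/-- Over a fixed `α`, the map `δ` takes every value between `0` and `|a^α|`. -/
lemma exists_kap_delt (hw : ∀ s t : S, w (s + t) = w s + w t) (α : FreeExp S) :
    ∀ d ≤ w (fac α), ∃ l : ATil S w →₀ ℕ, kap S w l = α ∧ delt w l = d := by
  have add : ∀ f g : FreeExp S,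
      (∀ d ≤ w (fac f), ∃ l : ATil S w →₀ ℕ, kap S w l = f ∧ delt w l = d) →
      (∀ d ≤ w (fac g), ∃ l : ATil S w →₀ ℕ, kap S w l = g ∧ delt w l = d) →
      ∀ d ≤ w (fac (f + g)), ∃ l : ATil S w →₀ ℕ, kap S w l = f + g ∧ delt w l = d := by
    intro f g hf hg d hd
    rw [fac_add, hw] at hd
    obtain ⟨l, hl, hl'⟩ := hf (min d (w (fac f))) (min_le_right _ _)
    obtain ⟨m, hm, hm'⟩ := hg (d - min d (w (fac f))) (by omega)
    exact ⟨l + m, by rw [kap_add, hl, hm], by rw [delt_add, hl', hm']; omega⟩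
  have zero : ∀ d ≤ w (fac (0 : FreeExp S)),
      ∃ l : ATil S w →₀ ℕ, kap S w l = 0 ∧ delt w l = d := by
    intro d hd
    rw [fac_zero, weight_zero hw] at hd
    exact ⟨0, kap_zero, by rw [delt_zero]; omega⟩
  induction α using Finsupp.induction_linear with
  | zero => exact zero
  | add f g hf hg => exact add f g hf hg
  | single a n =>
    induction n with
    | zero => rw [Finsupp.single_zero]; exact zero
    | succ k ih =>
      rw [Finsupp.single_add]
      refine add _ _ ih fun d hd => ?_
      rw [fac_single, one_nsmul] at hd
      exact ⟨Finsupp.single (atil w a d hd) 1, kap_single _ _,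
        by rw [delt_single, one_mul]; rfl⟩

/-- If `α` divides `κ(l)`, then `α` is the image of a divisor of `l`. -/
lemma kap_lift_divisor (α : FreeExp S) :
    ∀ (l : ATil S w →₀ ℕ) (v : FreeExp S), kap S w l = α + v →
      ∃ l' u, l = l' + u ∧ kap S w l' = α ∧ kap S w u = v := by
  have add : ∀ f g : FreeExp S,
      (∀ (l : ATil S w →₀ ℕ) (v : FreeExp S), kap S w l = f + v →
        ∃ l' u, l = l' + u ∧ kap S w l' = f ∧ kap S w u = v) →
      (∀ (l : ATil S w →₀ ℕ) (v : FreeExp S), kap S w l = g + v →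
        ∃ l' u, l = l' + u ∧ kap S w l' = g ∧ kap S w u = v) →
      ∀ (l : ATil S w →₀ ℕ) (v : FreeExp S), kap S w l = (f + g) + v →
        ∃ l' u, l = l' + u ∧ kap S w l' = f + g ∧ kap S w u = v := by
    intro f g hf hg l v h
    obtain ⟨l', u, h1, h2, h3⟩ := hf l (g + v) (by rw [h, add_assoc])
    obtain ⟨l'', u', h4, h5, h6⟩ := hg u v h3
    exact ⟨l' + l'', u', by rw [h1, h4, add_assoc], by rw [kap_add, h2, h5], h6⟩
  have zero : ∀ (l : ATil S w →₀ ℕ) (v : FreeExp S), kap S w l = 0 + v →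
      ∃ l' u, l = l' + u ∧ kap S w l' = 0 ∧ kap S w u = v :=
    fun l v h => ⟨0, l, (zero_add _).symm, kap_zero, by rw [h, zero_add]⟩
  induction α using Finsupp.induction_linear with
  | zero => exact zero
  | add f g hf hg => exact add f g hf hg
  | single a n =>
    induction n with
    | zero => rw [Finsupp.single_zero]; exact zero
    | succ k ih =>
      rw [Finsupp.single_add]
      refine add _ _ ih fun l v h => ?_
      have ha : a ∈ (kap S w l).support := by simp [h]
      classical
      obtain ⟨p, hp, rfl⟩ := Finset.mem_image.1 (Finsupp.mapDomain_support ha)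
      have hl : l = Finsupp.single p 1 + (l - Finsupp.single p 1) := by
        rw [add_tsub_cancel_of_le]
        rw [Finsupp.single_le_iff]
        exact Nat.one_le_iff_ne_zero.2 (Finsupp.mem_support_iff.1 hp)
      refine ⟨_, _, hl, kap_single _ _, ?_⟩
      rw [hl, kap_add, kap_single] at h
      exact add_left_cancel h

end Lifts

/-! ### Finiteness -/

section Finiteness

variable {S : Type} [AddCommMonoid S] {w : S → ℕ}

lemma finite_ATil [Finite ↥(Atoms S)] : Finite (ATil S w) := by
  have : Finite ((a : ↥(Atoms S)) × Fin (w (a : S) + 1)) := inferInstance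
  refine Finite.of_injective (β := (a : ↥(Atoms S)) × Fin (w (a : S) + 1))
    (fun p : ATil S w => ⟨p.val.1, ⟨p.val.2, Nat.lt_succ_of_le p.2⟩⟩) ?_
  rintro ⟨⟨a, i⟩, hi⟩ ⟨⟨b, j⟩, hj⟩ h
  simp only [Sigma.mk.injEq] at h
  obtain ⟨rfl, h⟩ := h
  simp only [heq_eq_eq, Fin.mk.injEq] at h
  subst h
  rfl

lemma apply_le_kap (l : ATil S w →₀ ℕ) (p : ATil S w) : l p ≤ kap S w l p.val.1 := by
  have hl : l = Finsupp.single p (l p) + (l - Finsupp.single p (l p)) := by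
    rw [add_tsub_cancel_of_le]
    rw [Finsupp.single_le_iff]
  have := congrArg (fun m => kap S w m p.val.1) hl
  simp only [kap_add, kap_single, Finsupp.add_apply, Finsupp.single_eq_same] at this
  omega

lemma finite_kap_fibre [Finite (ATil S w)] (α : FreeExp S) :
    {l : ATil S w →₀ ℕ | kap S w l = α}.Finite := by
  classical
  refine (Set.finite_Icc (0 : ATil S w →₀ ℕ)
    (Finsupp.equivFunOnFinite.symm fun p => α p.val.1)).subset ?_
  rintro l rfl
  exact ⟨zero_le, fun p => apply_le_kap l p⟩

lemma finite_Gam1 [Finite (ATil S w)] {Λ : Set (FreeExp S × FreeExp S)} (hΛ : Λ.Finite) :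
    {pr : (ATil S w →₀ ℕ) × (ATil S w →₀ ℕ) |
      (kap S w pr.1, kap S w pr.2) ∈ Λ ∧ delt w pr.1 = delt w pr.2}.Finite := by
  refine Set.Finite.subset (hΛ.preimage' (f := Prod.map (kap S w) (kap S w)) ?_)
    fun pr h => h.1
  rintro ⟨α, β⟩ -
  refine ((finite_kap_fibre α).prod (finite_kap_fibre β)).subset ?_
  intro pr h
  exact Prod.ext_iff.1 h

lemma finite_quadratic [Finite (ATil S w)] :
    (Set.range fun q : (ATil S w × ATil S w) × (ATil S w × ATil S w) =>
      ((Finsupp.single q.1.1 1 + Finsupp.single q.1.2 1,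
        Finsupp.single q.2.1 1 + Finsupp.single q.2.2 1) :
          (ATil S w →₀ ℕ) × (ATil S w →₀ ℕ))).Finite :=
  Set.finite_range _

end Finiteness

/-! ### Minimality inside a fibre of `κ` -/

section Fibre

variable {S : Type} [AddCommMonoid S] {w : S → ℕ}

lemma sum_kap [Fintype (ATil S w)] (l : ATil S w →₀ ℕ) (g : ↥(Atoms S) → ℤ) :
    ∑ q, (l q : ℤ) * g q.val.1 = (kap S w l).sum fun a n => (n : ℤ) * g a := by
  unfold kap
  rw [Finsupp.sum_mapDomain_index (by simp) (by intros; push_cast; ring),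
    Finsupp.sum_fintype _ _ (by simp)]

lemma sum_delt [Fintype (ATil S w)] (l : ATil S w →₀ ℕ) :
    ∑ q, (l q : ℤ) * (q.val.2 : ℤ) = delt w l := by
  unfold delt
  rw [Finsupp.sum_fintype _ _ (by simp)]
  push_cast
  rfl

lemma single_add_single_dvd {σ : Type*} {z : σ →₀ ℕ} {p q : σ} (hp : 0 < z p) (hq : 0 < z q)
    (h : p = q → 2 ≤ z p) : ∃ u, z = Finsupp.single p 1 + Finsupp.single q 1 + u := by
  classical
  refine ⟨z - (Finsupp.single p 1 + Finsupp.single q 1), (add_tsub_cancel_of_le ?_).symm⟩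
  intro r
  rw [Finsupp.add_apply, Finsupp.single_apply, Finsupp.single_apply]
  split_ifs with h1 h2 h2
  · subst h1; exact h h2.symm
  · subst h1; exact hp
  · subst h2; exact hq
  · exact Nat.zero_le _

/-- An element avoiding the leading terms of `Γ₂` and `Γ₃` is least among the elements with the
same `κ` and `δ`. -/
lemma fibre_minimal [Finite (ATil S w)]
    {lt : FreeExp S → FreeExp S → Prop} {n : ℕ} (e : Fin n ≃ ↥(Atoms S))
    (hmono : ∀ i j : Fin n, i < j → lt (Finsupp.single (e i) 1) (Finsupp.single (e j) 1))
    {z y : ATil S w →₀ ℕ}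
    (h2 : ∀ p ∈ Gam2 S w lt, ¬ ∃ u, z = p.1 + u) (h3 : ∀ p ∈ Gam3 S w, ¬ ∃ u, z = p.1 + u)
    (hk : kap S w z = kap S w y) (hd : delt w z = delt w y) :
    z = y ∨ ltTil w lt e z y := by
  classical
  have := Fintype.ofFinite (ATil S w)
  by_cases hzy : z = y
  · exact Or.inl hzy
  refine Or.inr (Or.inr ⟨hk, ?_⟩)
  -- The first position where `z` and `y` differ, in the order `posLt`.
  obtain ⟨p, hp, hmin⟩ := Finset.exists_min_image
    (Finset.univ.filter fun q => z q ≠ y q)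
    (fun q : ATil S w => (toLex (e.symm q.val.1, q.val.2) : Fin n ×ₗ ℕ)) (by
      by_contra hne
      rw [Finset.not_nonempty_iff_eq_empty, Finset.filter_eq_empty_iff] at hne
      exact hzy (Finsupp.ext fun q => not_not.1 (hne (Finset.mem_univ q))))
  simp only [Finset.mem_filter, Finset.mem_univ, true_and] at hp hmin
  have hbefore : ∀ q, posLt e q p → z q = y q := by
    intro q hq
    by_contra hne
    have hlex : (toLex (e.symm q.val.1, q.val.2) : Fin n ×ₗ ℕ) <
        toLex (e.symm p.val.1, p.val.2) := Prod.Lex.toLex_lt_toLex.2 hq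
    exact absurd (hmin q hne) (not_le.2 hlex)
  refine ⟨p, ?_, hbefore⟩
  by_contra hle
  have hlt : z p < y p := lt_of_le_of_ne (not_lt.1 hle) hp
  -- `κ(z) = κ(y)` forces `z` to make up for the deficit at `p` with some `a[i']`, `i' > i`.
  have hex : ∃ p' : ATil S w, p'.val.1 = p.val.1 ∧ p.val.2 < p'.val.2 ∧ 0 < z p' := by
    by_contra hno
    push Not at hno
    have e1 := sum_kap z fun a => if a = p.val.1 then 1 else 0
    have e2 := sum_kap y fun a => if a = p.val.1 then 1 else 0
    rw [hk, ← e2] at e1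
    refine absurd e1 (ne_of_lt (Finset.sum_lt_sum ?_ ⟨p, Finset.mem_univ _, by simpa⟩))
    intro q _
    split_ifs with hq
    · rcases lt_trichotomy q.val.2 p.val.2 with h | h | h
      · rw [hbefore q (Or.inr ⟨by rw [hq], h⟩)]
      · have : q = p := Subtype.ext (Prod.ext hq h)
        subst this
        simpa using hlt.le
      · have := hno q hq h
        have : z q = 0 := by omega
        simp [this]
    · simp
  obtain ⟨p', hp'1, hp'2, hp'3⟩ := hex
  have htop : p'.val.2 ≤ w (p.val.1 : S) := by
    have hle' := p'.property
    rwa [hp'1] at hle'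
  have hlater : ∀ q : ATil S w, e.symm p.val.1 < e.symm q.val.1 →
      q.val.2 < w (q.val.1 : S) → z q = 0 := by
    intro q hq hqt
    by_contra hne
    -- Otherwise `p'` and `q` are the two factors of a leading term of `Γ₂`.
    have hpq : p' ≠ q := by
      rintro rfl
      rw [hp'1] at hq
      exact lt_irrefl _ hq
    refine h2 _ ⟨p'.val.1, q.val.1, p'.val.2, q.val.2, by omega, p'.2, hqt, ?_, rfl⟩
      (single_add_single_dvd hp'3 (Nat.pos_of_ne_zero hne) fun h => absurd h hpq)
    have := hmono _ _ hq
    rwa [e.apply_symm_apply, e.apply_symm_apply, ← hp'1] at this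
  -- Consequences of avoiding `Γ₃`: the intermediate factor is unique and has multiplicity one.
  have hmid : ∀ q r : ATil S w, q.val.1 = r.val.1 → 0 < q.val.2 → q.val.2 ≤ r.val.2 →
      r.val.2 < w (r.val.1 : S) → 0 < z q → 0 < z r → q = r ∧ z q ≤ 1 := by
    rintro ⟨⟨a, i⟩, hi⟩ ⟨⟨b, j⟩, hj⟩ hab h0 hij hjw hzq hzr
    dsimp only at hab h0 hij hjw
    subst hab
    by_contra hcon
    refine h3 _ ⟨a, i, j, h0, hij, hjw, rfl⟩ (single_add_single_dvd hzq hzr fun h => ?_)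
    by_contra hz
    exact hcon ⟨h, by change ¬ 2 ≤ z ⟨(a, i), hi⟩ at hz; omega⟩
  have hcod : ∑ q, ((z q : ℤ) - y q) * ((w (q.val.1 : S) : ℤ) - q.val.2) = 0 := by
    have e1 := sum_kap z fun a => (w (a : S) : ℤ)
    have e2 := sum_kap y fun a => (w (a : S) : ℤ)
    rw [hk, ← e2] at e1
    have e3 := sum_delt z
    rw [hd, ← sum_delt y] at e3
    calc _ = (∑ q, (z q : ℤ) * w (q.val.1 : S) - ∑ q, (y q : ℤ) * w (q.val.1 : S))
          - (∑ q, (z q : ℤ) * q.val.2 - ∑ q, (y q : ℤ) * q.val.2) := by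
          simp only [← Finset.sum_sub_distrib]
          exact Finset.sum_congr rfl fun q _ => by ring
      _ = 0 := by rw [e1, e3]; ring
  have hfp : ((z p : ℤ) - y p) * ((w (p.val.1 : S) : ℤ) - p.val.2)
      ≤ -((w (p.val.1 : S) : ℤ) - p.val.2) := by
    have h1 : (z p : ℤ) - y p ≤ -1 := by omega
    have h2 : (0 : ℤ) ≤ (w (p.val.1 : S) : ℤ) - p.val.2 := by omega
    nlinarith
  -- Positions with a positive contribution are intermediate positions of the atom of `p`.
  have hpos : ∀ q : ATil S w, 0 < ((z q : ℤ) - y q) * ((w (q.val.1 : S) : ℤ) - q.val.2) →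
      q.val.1 = p.val.1 ∧ p.val.2 < q.val.2 ∧ q.val.2 < w (q.val.1 : S) ∧ 0 < z q := by
    intro q hq
    have hqw := q.2
    have hne : q.val.2 ≠ w (q.val.1 : S) := fun h => by simp [h] at hq
    have hqt : q.val.2 < w (q.val.1 : S) := lt_of_le_of_ne hqw hne
    have hgt : (0 : ℤ) < (z q : ℤ) - y q := pos_of_mul_pos_left hq (by omega)
    have hzq : 0 < z q := by omega
    have hnb : ¬ posLt e q p := fun h => by have := hbefore q h; omega
    have hnl : ¬ e.symm p.val.1 < e.symm q.val.1 := fun h => by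
      have := hlater q h hqt; omega
    have hsame : q.val.1 = p.val.1 := by
      refine e.symm.injective (le_antisymm (not_lt.1 hnl) (not_lt.1 fun h => hnb (Or.inl h)))
    refine ⟨hsame, ?_, hqt, hzq⟩
    rcases lt_trichotomy q.val.2 p.val.2 with h | h | h
    · exact absurd (Or.inr ⟨by rw [hsame], h⟩) hnb
    · have : q = p := Subtype.ext (Prod.ext hsame h)
      subst this
      omega
    · exact h
  by_cases hq0 : ∃ q0 : ATil S w,
      0 < ((z q0 : ℤ) - y q0) * ((w (q0.val.1 : S) : ℤ) - q0.val.2)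
  · obtain ⟨q0, hq0⟩ := hq0
    obtain ⟨hs, hi, ht, hz0⟩ := hpos q0 hq0
    have hqp : q0 ≠ p := fun h => by subst h; exact lt_irrefl _ hi
    have hz1 : z q0 ≤ 1 := (hmid q0 q0 rfl (by omega) le_rfl ht hz0 hz0).2
    have hf0 : ((z q0 : ℤ) - y q0) * ((w (q0.val.1 : S) : ℤ) - q0.val.2)
        ≤ (w (p.val.1 : S) : ℤ) - q0.val.2 := by
      have h1 : (z q0 : ℤ) - y q0 ≤ 1 := by omega
      have h2 : (0 : ℤ) ≤ (w (q0.val.1 : S) : ℤ) - q0.val.2 := by omega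
      rw [hs] at h2 ⊢
      nlinarith
    have hrest : ∑ q ∈ (Finset.univ.erase p).erase q0,
        ((z q : ℤ) - y q) * ((w (q.val.1 : S) : ℤ) - q.val.2) ≤ 0 := by
      refine Finset.sum_nonpos fun q hq => ?_
      by_contra hcon
      obtain ⟨hs', hi', ht', hz'⟩ := hpos q (not_le.1 hcon)
      have hne := Finset.ne_of_mem_erase hq
      rcases le_total q.val.2 q0.val.2 with h | h
      · exact hne (hmid q q0 (hs'.trans hs.symm) (by omega) h ht hz' hz0).1
      · exact hne (hmid q0 q (hs.trans hs'.symm) (by omega) h ht' hz0 hz').1.symm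
    rw [← Finset.add_sum_erase _ _ (Finset.mem_univ p),
      ← Finset.add_sum_erase _ _ (Finset.mem_erase.2 ⟨hqp, Finset.mem_univ q0⟩)] at hcod
    omega
  · push Not at hq0
    have hrest : ∑ q ∈ Finset.univ.erase p,
        ((z q : ℤ) - y q) * ((w (q.val.1 : S) : ℤ) - q.val.2) ≤ 0 :=
      Finset.sum_nonpos fun q _ => hq0 q
    rw [← Finset.add_sum_erase _ _ (Finset.mem_univ p)] at hcod
    omega

/-- Replacing `p · q` by `p' · q'` over the same atoms of `S` decreases the extended order when `p'`
precedes `p`, `q` and `q'`: the exponent at `p'` rises from `0`, and those before it are all `0`.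
The relations in `Γ₂` and `Γ₃` have this form with `p = a[i]` and `p' = a[i-1]`. -/
lemma ltTil_quadratic {lt : FreeExp S → FreeExp S → Prop} {n : ℕ} (e : Fin n ≃ ↥(Atoms S))
    {p q p' q' : ATil S w} (hp : p.val.1 = p'.val.1) (hq : q.val.1 = q'.val.1)
    (h1 : posLt e p' p) (h2 : posLt e p' q) (h3 : posLt e p' q') :
    ltTil w lt e (Finsupp.single p' 1 + Finsupp.single q' 1)
      (Finsupp.single p 1 + Finsupp.single q 1) := by
  have irr : ∀ r : ATil S w, ¬ posLt e r r := fun r h => by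
    rcases h with h | h
    · exact lt_irrefl _ h
    · exact lt_irrefl _ h.2
  have asymm : ∀ r s : ATil S w, posLt e r s → ¬ posLt e s r := fun r s h h' => by
    rcases h with h | h <;> rcases h' with h' | h'
    · exact lt_asymm h h'
    · exact absurd h'.1 h.ne'
    · exact absurd h.1 h'.ne'
    · exact lt_asymm h.2 h'.2
  have val : ∀ r s : ATil S w, r ≠ s → (Finsupp.single r 1 : ATil S w →₀ ℕ) s = 0 :=
    fun r s h => Finsupp.single_eq_of_ne h.symm
  refine Or.inr ⟨by simp only [kap_add, kap_single, hp, hq], p', ?_, fun r hr => ?_⟩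
  · rw [Finsupp.add_apply, Finsupp.add_apply, val p p' (fun h => irr p' (h ▸ h1)),
      val q p' (fun h => irr p' (h ▸ h2)), Finsupp.single_eq_same]
    omega
  · rw [Finsupp.add_apply, Finsupp.add_apply, val p r (fun h => asymm _ _ h1 (h ▸ hr)),
      val q r (fun h => asymm _ _ h2 (h ▸ hr)), val q' r (fun h => asymm _ _ h3 (h ▸ hr)),
      val p' r (fun h => irr p' (h ▸ hr))]

end Fibre

/-- Theorem 5.4: if `Λ` is a Gröbner system of `∼_S`, then
`Γ₁ ∪ Γ₂ ∪ Γ₃` is a Gröbner system of `∼_{S̃}` with respect to the extended order. -/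
theorem tilde_groebner_system (S : Type) [AddCommMonoid S] [IsReducedAffine S]
    (w : S → ℕ) (hw : ∀ s t : S, w (s + t) = w s + w t)
    (lt : FreeExp S → FreeExp S → Prop) (hadm : IsAdmissible lt)
    (n : ℕ) (e : Fin n ≃ ↥(Atoms S))
    (hmono : ∀ i j : Fin n, i < j →
      lt (Finsupp.single (e i) 1) (Finsupp.single (e j) 1))
    (Λ : Set (FreeExp S × FreeExp S)) (hΛ : IsGroebnerSystem lt (defCon S) Λ) :
    IsGroebnerSystem (ltTil w lt e) (defConTil S w)
      ({pr | (kap S w pr.1, kap S w pr.2) ∈ Λ ∧ delt w pr.1 = delt w pr.2} ∪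
        Gam2 S w lt ∪ Gam3 S w) := by
  have hfin : Finite ↥(Atoms S) := Finite.of_equiv _ e
  have hfinT : Finite (ATil S w) := finite_ATil
  obtain ⟨-, htrans, hirr, -, -⟩ := hadm
  obtain ⟨hΛfin, hΛrel, hΛmin⟩ := hΛ
  refine ⟨?_, ?_, ?_⟩
  · refine ((finite_Gam1 hΛfin).union ?_).union ?_
    · refine finite_quadratic.subset ?_
      rintro _ ⟨a, b, i, j, _, hi, hj, _, rfl⟩
      exact ⟨((_, _), (_, _)), rfl⟩
    · refine finite_quadratic.subset ?_
      rintro _ ⟨a, i, j, _, hij, hj, rfl⟩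
      exact ⟨((_, _), (_, _)), rfl⟩
  · rintro pr ((⟨hpr, hd⟩ | ⟨a, b, i, j, hi0, hi, hj, hab, rfl⟩) | ⟨a, i, j, hi0, hij, hj, rfl⟩)
    · obtain ⟨hc, hl⟩ := hΛrel _ hpr
      exact ⟨⟨hc, hd⟩, Or.inl hl⟩
    · have hlt : e.symm a < e.symm b := by
        rcases lt_trichotomy (e.symm a) (e.symm b) with h | h | h
        · exact h
        · rw [e.symm.injective h] at hab
          exact absurd hab (hirr _)
        · have := hmono _ _ h
          rw [e.apply_symm_apply, e.apply_symm_apply] at this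
          exact absurd (htrans _ _ _ hab this) (hirr _)
      refine ⟨⟨?_, ?_⟩, ltTil_quadratic e rfl rfl (Or.inr ⟨rfl, ?_⟩) (Or.inl hlt) (Or.inl hlt)⟩
      · simp only [kap_add, kap_single]
        rfl
      · simp only [delt_add, delt_single]
        dsimp only [atil]
        omega
      · simp only [atil]
        omega
    · refine ⟨⟨?_, ?_⟩, ltTil_quadratic e rfl rfl (Or.inr ⟨rfl, ?_⟩) (Or.inr ⟨rfl, ?_⟩)
        (Or.inr ⟨rfl, ?_⟩)⟩
      · simp only [kap_add, kap_single]
        rfl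
      · simp only [delt_add, delt_single]
        dsimp only [atil]
        omega
      all_goals
        simp only [atil]
        omega
  · rintro z hz y ⟨hf, hd⟩
    have hkz : ∀ p ∈ Λ, ¬ ∃ u, kap S w z = p.1 + u := by
      rintro ⟨α, β⟩ hp ⟨v, hv⟩
      obtain ⟨l, u, hl, hlα, -⟩ := kap_lift_divisor α z v hv
      have hαβ : fac α = fac β := (hΛrel _ hp).1
      obtain ⟨m, hm, hmd⟩ := exists_kap_delt hw β (delt w l) (by
        have := delt_le hw l
        rwa [hlα, hαβ] at this)
      exact hz (l, m) (Or.inl (Or.inl ⟨by simpa only [hlα, hm] using hp, hmd.symm⟩)) ⟨u, hl⟩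
    rcases hΛmin _ hkz (kap S w y) hf with h | h
    · exact fibre_minimal e hmono (fun p hp => hz p (Or.inl (Or.inr hp)))
        (fun p hp => hz p (Or.inr hp)) h hd
    · exact Or.inr (Or.inl h)
end

section
/- Let G be an abelian group and g = (g₁,…,g_m) ∈ G^m. If the defining congruence of ℬ(supp(g)) has a quadratic Gröbner system with respect to some admissible total order, then the defining congruence of ℬ(g) also has a quadratic Gröbner system with respect to some admissible total order. -/
/-! ### Exponent vectors -/

section ExponentVectors

open Finsupp

variable {A B X : Type*}

/-- A decomposition of the image of an exponent vector lifts to a decomposition of the vector. -/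
lemma exists_split_of_mapDomain_eq_add (f : A → B) (z : A →₀ ℕ) :
    ∀ l n : B →₀ ℕ, mapDomain f z = l + n →
      ∃ l' n', z = l' + n' ∧ mapDomain f l' = l ∧ mapDomain f n' = n := by
  classical
  suffices H : ∀ s : Multiset A, ∀ l n : B →₀ ℕ, mapDomain f (Multiset.toFinsupp s) = l + n →
      ∃ l' n', Multiset.toFinsupp s = l' + n' ∧ mapDomain f l' = l ∧ mapDomain f n' = n by
    simpa using H (Finsupp.toMultiset z)
  intro s
  induction s using Multiset.induction_on with
  | empty =>
    intro l n h
    have h' : l + n = 0 := by simpa using h.symm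
    rw [add_eq_zero] at h'
    exact ⟨0, 0, by simp, by simp [h'.1], by simp [h'.2]⟩
  | cons a s ih =>
    intro l n h
    rw [← Multiset.singleton_add, map_add, mapDomain_add, Multiset.toFinsupp_singleton,
      mapDomain_single] at h
    rw [← Multiset.singleton_add, map_add, Multiset.toFinsupp_singleton]
    have hpos : 0 < l (f a) + n (f a) := by
      rw [← Finsupp.add_apply, ← h]; simp
    rcases Nat.eq_zero_or_pos (l (f a)) with hl | hl
    · have hle : single (f a) 1 ≤ n := by
        rw [Finsupp.single_le_iff]; omega
      obtain ⟨n1, rfl⟩ := exists_add_of_le hle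
      obtain ⟨l', n', h1, h2, h3⟩ := ih l n1 (by
        rw [add_left_comm] at h; exact add_left_cancel h)
      refine ⟨l', single a 1 + n', ?_, h2, ?_⟩
      · rw [h1, add_left_comm]
      · rw [mapDomain_add, mapDomain_single, h3]
    · have hle : single (f a) 1 ≤ l := by
        rw [Finsupp.single_le_iff]; omega
      obtain ⟨l1, rfl⟩ := exists_add_of_le hle
      obtain ⟨l', n', h1, h2, h3⟩ := ih l1 n (by
        rw [add_assoc] at h; exact add_left_cancel h)
      refine ⟨single a 1 + l', n', ?_, ?_, h3⟩
      · rw [h1, add_assoc]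
      · rw [mapDomain_add, mapDomain_single, h2]

lemma degE_add (x y : A →₀ ℕ) : degE (x + y) = degE x + degE y :=
  Finsupp.sum_add_index' (fun _ => rfl) (fun _ _ _ => rfl)

lemma degE_mapDomain (f : A → B) (x : A →₀ ℕ) : degE (mapDomain f x) = degE x :=
  Finsupp.sum_mapDomain_index (fun _ => rfl) (fun _ _ _ => rfl)

lemma degE_single (a : A) (n : ℕ) : degE (single a n) = n :=
  Finsupp.sum_single_index rfl

lemma apply_le_degE (x : A →₀ ℕ) (a : A) : x a ≤ degE x := by
  by_cases h : a ∈ x.support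
  · exact Finset.single_le_sum (f := fun a => x a) (fun _ _ => Nat.zero_le _) h
  · simp [Finsupp.notMem_support_iff.mp h]

lemma eq_zero_of_degE_eq_zero {x : A →₀ ℕ} (h : degE x = 0) : x = 0 := by
  ext a
  have := apply_le_degE x a
  simp only [Finsupp.coe_zero, Pi.zero_apply]
  omega

lemma finite_degE_le [Finite A] (d : ℕ) : {x : A →₀ ℕ | degE x ≤ d}.Finite := by
  classical
  have := Fintype.ofFinite A
  refine (Set.finite_Iic (Finsupp.equivFunOnFinite.symm fun _ : A => d)).subset ?_
  intro x hx a
  exact (apply_le_degE x a).trans hx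

/-- The order obtained from an order `lt` on the target of `f`, with ties broken by the
lexicographic order in which a larger exponent at the first difference makes the vector smaller. -/
def liftLt [LinearOrder A] (f : A → B) (lt : (B →₀ ℕ) → (B →₀ ℕ) → Prop)
    (x y : A →₀ ℕ) : Prop :=
  lt (mapDomain f x) (mapDomain f y) ∨
    (mapDomain f x = mapDomain f y ∧ toLex y < toLex x)

/-- The tie-breaker alone is not admissible, since it makes `0` the largest vector; but a nonzero
vector is never tied with `0`, as `f` preserves degrees. -/
lemma isAdmissible_liftLt [LinearOrder A] (f : A → B) {lt : (B →₀ ℕ) → (B →₀ ℕ) → Prop}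
    (h : IsAdmissible lt) : IsAdmissible (liftLt f lt) := by
  obtain ⟨htot, htr, hirr, hadd, hpos⟩ := h
  refine ⟨fun x y => ?_, fun x y z hxy hyz => ?_, fun x hx => ?_, fun x y z hxy => ?_,
    fun x hx => ?_⟩
  · rcases htot (mapDomain f x) (mapDomain f y) with h | h | h
    · exact Or.inl (Or.inl h)
    · rcases lt_trichotomy (toLex x) (toLex y) with h' | h' | h'
      · exact Or.inr (Or.inr (Or.inr ⟨h.symm, h'⟩))
      · exact Or.inr (Or.inl (toLex_inj.mp h'))
      · exact Or.inl (Or.inr ⟨h, h'⟩)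
    · exact Or.inr (Or.inr (Or.inl h))
  · rcases hxy with hxy | ⟨hxy, hxy'⟩ <;> rcases hyz with hyz | ⟨hyz, hyz'⟩
    · exact Or.inl (htr _ _ _ hxy hyz)
    · exact Or.inl (hyz ▸ hxy)
    · exact Or.inl (hxy ▸ hyz)
    · exact Or.inr ⟨hxy.trans hyz, hyz'.trans hxy'⟩
  · rcases hx with hx | ⟨_, hx⟩
    · exact hirr _ hx
    · exact lt_irrefl _ hx
  · rcases hxy with hxy | ⟨hxy, hxy'⟩
    · left
      rw [mapDomain_add, mapDomain_add]
      exact hadd _ _ _ hxy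
    · right
      refine ⟨by rw [mapDomain_add, mapDomain_add, hxy], ?_⟩
      obtain ⟨p, hp, hp'⟩ := Finsupp.Lex.lt_iff.mp hxy'
      refine Finsupp.Lex.lt_iff.mpr ⟨p, fun q hq => ?_, ?_⟩
      · have := hp q hq
        simp only [ofLex_toLex, Finsupp.add_apply] at this ⊢
        rw [this]
      · simp only [ofLex_toLex, Finsupp.add_apply] at hp' ⊢
        omega
  · left
    rw [mapDomain_zero]
    refine hpos _ fun h0 => hx (eq_zero_of_degE_eq_zero ?_)
    rw [← degE_mapDomain f x, h0]
    rfl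

/-- The total content at `i` of the exponent vector `z`, where a generator `u` has content `e u`. -/
def content (e : A → X → ℕ) (z : A →₀ ℕ) (i : X) : ℕ := z.sum fun u n => n * e u i

lemma content_add (e : A → X → ℕ) (x y : A →₀ ℕ) (i : X) :
    content e (x + y) i = content e x i + content e y i :=
  Finsupp.sum_add_index' (fun _ => Nat.zero_mul _) (fun _ _ _ => Nat.add_mul _ _ _)

lemma content_single (e : A → X → ℕ) (u : A) (i : X) : content e (single u 1) i = e u i := by
  simp [content, Finsupp.sum_single_index]

/-- Replacing the smaller member of a pair by a still smaller generator makes the pair larger in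
the lexicographic order, whatever happens to the other member. -/
lemma pair_toLex_lt [LinearOrder A] {u v u' : A} (v' : A) (huv : u ≤ v) (hu : u' < u) :
    toLex (single u 1 + single v 1 : A →₀ ℕ) < toLex (single u' 1 + single v' 1) := by
  have hL : (single u 1 + single v 1 : A →₀ ℕ) u' = 0 := by
    simp [hu.ne, (hu.trans_le huv).ne]
  have hR : 0 < (single u' 1 + single v' 1 : A →₀ ℕ) u' := by simp
  by_contra hcon
  rcases (not_lt.mp hcon).lt_or_eq with hlt | heq
  · obtain ⟨q, hq, hq'⟩ := Finsupp.Lex.lt_iff.mp hlt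
    simp only [ofLex_toLex] at hq hq'
    have hqu : u ≤ q := by
      by_contra hqu
      rw [not_le] at hqu
      have : (single u 1 + single v 1 : A →₀ ℕ) q = 0 := by
        simp [hqu.ne, (hqu.trans_le huv).ne]
      omega
    have := hq u' (hu.trans_le hqu)
    omega
  · rw [toLex_inj] at heq
    rw [heq] at hR
    omega

/-- The exchange argument. The generators of the free monoid carry contents over the positions
`Fin m`, and `f` remembers only the content of each fibre of `g`. If `y` has the same image under
`f` and the same content as `z` but precedes it, then some pair of generators dividing `z` can be
improved by exchanging two labels of the same fibre.

`hsum`, `hord` and `hconv` say that generators with the same image under `f` have equal contents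
over each fibre of `g`, form an interval, and are ordered so that more content at the first
difference makes a generator smaller; `hswap` provides the exchanges. -/
lemma exists_improvable_pair [LinearOrder A] {m : ℕ} (g : Fin m → X) (f : A → B)
    (e : A → Fin m → ℕ)
    (hsum : ∀ u v, f u = f v → ∀ (s : Finset (Fin m)) (x : X),
      (∀ i, i ∈ s ↔ g i = x) → ∑ i ∈ s, e u i = ∑ i ∈ s, e v i)
    (hord : ∀ u v, f u = f v → (u < v ↔ ∃ i, (∀ k < i, e u k = e v k) ∧ e v i < e u i))
    (hconv : ∀ u v w, u ≤ v → v ≤ w → f u = f w → f u = f v)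
    (hswap : ∀ u i j, g i = g j → 0 < e u j → ∃ u', f u' = f u ∧
      ∀ k, e u' k + (if k = j then 1 else 0) = e u k + (if k = i then 1 else 0))
    {z y : A →₀ ℕ} (hf : mapDomain f z = mapDomain f y)
    (he : ∀ i, content e z i = content e y i) (hlt : toLex z < toLex y) :
    ∃ u v u' v', single u 1 + single v 1 ≤ z ∧ f u' = f u ∧ f v' = f v ∧
      (∀ i, e u' i + e v' i = e u i + e v i) ∧
      toLex (single u 1 + single v 1 : A →₀ ℕ) < toLex (single u' 1 + single v' 1) := by
  classical
  obtain ⟨p, hp, hp'⟩ := Finsupp.Lex.lt_iff.mp hlt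
  simp only [ofLex_toLex] at hp' hp
  -- Cancel the common part: `z' = z - y` and `y' = y - z` (truncated) have disjoint supports.
  set z' := z - y with hz'
  set y' := y - z with hy'
  have hadd : z + y' = y + z' := by
    ext a
    simp only [hz', hy', Finsupp.add_apply, Finsupp.tsub_apply]
    omega
  have hf' : mapDomain f z' = mapDomain f y' := by
    have := congrArg (mapDomain f) hadd
    rw [mapDomain_add, mapDomain_add, hf] at this
    exact (add_left_cancel this).symm
  have he' : ∀ i, content e z' i = content e y' i := by
    intro i
    have := congrArg (fun x => content e x i) hadd
    simp only [content_add, he] at this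
    omega
  have hy'p : single p 1 ≤ y' := by
    rw [Finsupp.single_le_iff]
    simp only [hy', Finsupp.tsub_apply]
    omega
  have hz'p : ∀ v ∈ z'.support, p < v := by
    intro v hv
    have hv' : 0 < z v - y v := by
      exact Nat.pos_of_ne_zero (Finsupp.mem_support_iff.mp hv)
    rcases lt_trichotomy v p with h | h | h
    · have := hp v h
      omega
    · subst h; omega
    · exact h
  obtain ⟨u₂, hu₂, hfu₂⟩ : ∃ u₂ ∈ z'.support, f u₂ = f p := by
    have h1 : f p ∈ (mapDomain f z').support := by
      rw [hf', Finsupp.mem_support_iff]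
      obtain ⟨r, hr⟩ := exists_add_of_le hy'p
      rw [hr, mapDomain_add, mapDomain_single]
      simp
    simpa using Finset.mem_image.mp (mapDomain_support h1)
  set u := z'.support.min' ⟨u₂, hu₂⟩ with hu
  have hu_mem : u ∈ z'.support := Finset.min'_mem _ _
  have hu_min : ∀ v ∈ z'.support, u ≤ v := fun v hv => Finset.min'_le _ _ hv
  have hpu := hz'p u hu_mem
  have hfpu : f p = f u := hconv p u u₂ hpu.le (hu_min _ hu₂) hfu₂.symm
  obtain ⟨i, hik, hi⟩ := (hord p u hfpu).mp hpu
  -- Within the fibre of `i`, `u` has less content than `p` at `i`, so it has more at some `j > i`.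
  obtain ⟨j, hgj, hj⟩ : ∃ j, g j = g i ∧ e p j < e u j := by
    have hs := hsum p u hfpu (Finset.univ.filter fun k => g k = g i) (g i) (by simp)
    by_contra hcon
    push Not at hcon
    refine (Finset.sum_lt_sum (s := Finset.univ.filter fun k => g k = g i)
      (f := e u) (g := e p) (fun k hk => ?_) ⟨i, by simp, hi⟩).ne' hs
    exact hcon k (by simpa using hk)
  have hij : i < j := by
    rcases lt_trichotomy i j with h | h | h
    · exact h
    · subst h; omega
    · have := hik j h
      omega
  have huz' : single u 1 ≤ z' := by
    rw [Finsupp.single_le_iff]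
    exact Nat.pos_of_ne_zero (Finsupp.mem_support_iff.mp hu_mem)
  obtain ⟨t, ht⟩ := exists_add_of_le hy'p
  obtain ⟨r, hr⟩ : ∃ r, z' = single u 1 + r := exists_add_of_le huz'
  have hir : content e z' i = e u i + content e r i := by
    rw [hr, content_add, content_single]
  -- The content at `i` cannot all sit in `u`, because `p` alone has more.
  obtain ⟨v, hvr, hvi⟩ : ∃ v ∈ r.support, 0 < e v i := by
    by_contra hcon
    push Not at hcon
    have h0 : content e r i = 0 := by
      refine Finset.sum_eq_zero fun v hv => ?_
      have := hcon v hv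
      simp only [Nat.le_zero.mp this, mul_zero]
    have := he' i
    rw [hir, ht, content_add, content_single, h0] at this
    omega
  have hvr' : single v 1 ≤ r := by
    rw [Finsupp.single_le_iff]
    exact Nat.pos_of_ne_zero (Finsupp.mem_support_iff.mp hvr)
  have hpair : single u 1 + single v 1 ≤ z' := by
    rw [hr]; gcongr
  have huv : u ≤ v := by
    refine hu_min v ?_
    rw [Finsupp.mem_support_iff, hr, Finsupp.add_apply]
    have := Finsupp.mem_support_iff.mp hvr
    omega
  obtain ⟨u', hfu', heu'⟩ := hswap u i j hgj.symm (by omega)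
  obtain ⟨v', hfv', hev'⟩ := hswap v j i hgj hvi
  have huu' : u' < u := by
    refine (hord u' u hfu').mpr ⟨i, fun k hk => ?_, ?_⟩
    · have := heu' k
      rw [if_neg hk.ne, if_neg (hk.trans hij).ne] at this
      exact this
    · have := heu' i
      rw [if_pos rfl, if_neg hij.ne] at this
      omega
  refine ⟨u, v, u', v', hpair.trans tsub_le_self, hfu', hfv', fun k => ?_, pair_toLex_lt v' huv huu'⟩
  have h1 := heu' k
  have h2 := hev' k
  omega

end ExponentVectors

/-! ### The transfer homomorphism from `ℬ(g)` to `ℬ(supp g)` -/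

section Transfer

open Finsupp

variable {G : Type} {m : ℕ} (g : Fin m → G)

/-- The content of a vector over `Fin m` collected along the fibres of `g`. -/
noncomputable def fibreSum (F : Fin m → ℕ) : Set.range g →₀ ℕ :=
  mapDomain (Set.rangeFactorization g) (equivFunOnFinite.symm F)

lemma fibreSum_add (F F' : Fin m → ℕ) : fibreSum g (F + F') = fibreSum g F + fibreSum g F' := by
  rw [fibreSum, fibreSum, fibreSum, ← mapDomain_add]
  congr 1
  ext
  rfl

variable [CommGroup G]

lemma fibreSum_mem (F : Fin m → ℕ) : fibreSum g F ∈ BlockS (Set.range g) ↔ F ∈ BlockT g := by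
  show (fibreSum g F).prod (fun x n => (x : G) ^ n) = 1 ↔ ∏ i, g i ^ F i = 1
  rw [fibreSum, Finsupp.prod_mapDomain_index (fun _ => pow_zero _) (fun _ _ _ => pow_add _ _ _),
    Finsupp.prod_fintype _ _ (fun _ => pow_zero _)]
  rfl

/-- The transfer homomorphism `ℬ(g) → ℬ(supp g)`. -/
noncomputable def push : ↥(BlockT g) →+ ↥(BlockS (Set.range g)) where
  toFun t := ⟨fibreSum g t, (fibreSum_mem g t).mpr t.2⟩
  map_zero' := by
    apply Subtype.ext
    show fibreSum g 0 = 0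
    rw [fibreSum, show equivFunOnFinite.symm (0 : Fin m → ℕ) = 0 by ext; rfl, mapDomain_zero]
  map_add' t t' := Subtype.ext (fibreSum_add g t t')

lemma push_val (t : ↥(BlockT g)) : (push g t : Set.range g →₀ ℕ) = fibreSum g t := rfl

lemma push_split {t : ↥(BlockT g)} {s₁ s₂ : ↥(BlockS (Set.range g))} (h : push g t = s₁ + s₂) :
    ∃ t₁ t₂, t = t₁ + t₂ ∧ push g t₁ = s₁ ∧ push g t₂ = s₂ := by
  obtain ⟨F₁, F₂, h0, h1, h2⟩ := exists_split_of_mapDomain_eq_add _ _ _ _ (congrArg Subtype.val h)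
  have e1 : fibreSum g F₁ = s₁ := by
    rw [← h1, fibreSum]; congr 1; ext; rfl
  have e2 : fibreSum g F₂ = s₂ := by
    rw [← h2, fibreSum]; congr 1; ext; rfl
  refine ⟨⟨F₁, (fibreSum_mem g F₁).mp (e1 ▸ s₁.2)⟩, ⟨F₂, (fibreSum_mem g F₂).mp (e2 ▸ s₂.2)⟩,
    ?_, Subtype.ext e1, Subtype.ext e2⟩
  apply Subtype.ext
  funext i
  exact DFunLike.congr_fun h0 i

lemma push_eq_zero {t : ↥(BlockT g)} (h : push g t = 0) : t = 0 := by
  have h0 : fibreSum g t = 0 := congrArg Subtype.val h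
  have h1 : degE (equivFunOnFinite.symm (t : Fin m → ℕ)) = 0 := by
    rw [← degE_mapDomain (Set.rangeFactorization g)]
    show degE (fibreSum g t) = 0
    rw [h0]; rfl
  apply Subtype.ext
  funext i
  exact DFunLike.congr_fun (eq_zero_of_degE_eq_zero h1) i

lemma isAtm_push (t : ↥(BlockT g)) : IsAtm (push g t) ↔ IsAtm t := by
  constructor
  · rintro ⟨h0, h⟩
    refine ⟨fun ht => h0 (by rw [ht, map_zero]), fun b c hbc => ?_⟩
    rcases h (push g b) (push g c) (by rw [hbc, map_add]) with h' | h'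
    · exact Or.inl (push_eq_zero g h')
    · exact Or.inr (push_eq_zero g h')
  · rintro ⟨h0, h⟩
    refine ⟨fun ht => h0 (push_eq_zero g ht), fun b c hbc => ?_⟩
    obtain ⟨t₁, t₂, ht, rfl, rfl⟩ := push_split g hbc
    rcases h t₁ t₂ ht with rfl | rfl
    · exact Or.inl (map_zero _)
    · exact Or.inr (map_zero _)

/-- The transfer homomorphism on atoms. -/
noncomputable def pushAtom (u : ↥(Atoms ↥(BlockT g))) : ↥(Atoms ↥(BlockS (Set.range g))) :=
  ⟨push g u, (isAtm_push g u).mpr u.2⟩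

lemma fac_single_s13 {S : Type*} [AddCommMonoid S] (a : ↥(Atoms S)) :
    fac (single a 1 : FreeExp S) = a := by
  exact (Finsupp.sum_single_index (zero_nsmul (a : S))).trans (one_nsmul _)

lemma fac_mapDomain_pushAtom (z : FreeExp ↥(BlockT g)) :
    fac (mapDomain (pushAtom g) z) = push g (fac z) := by
  rw [fac, fac, map_finsuppSum]
  refine (Finsupp.sum_mapDomain_index
    (h := fun (a : ↥(Atoms ↥(BlockS (Set.range g)))) n => n • (a : ↥(BlockS (Set.range g))))
    (fun _ => zero_nsmul _) (fun _ _ _ => add_nsmul _ _ _)).trans ?_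
  simp only [map_nsmul]
  rfl

/-- Every factorization of the image of `t` lifts to a factorization of `t`. -/
lemma exists_lift_fac (μ : FreeExp ↥(BlockS (Set.range g))) :
    ∀ t : ↥(BlockT g), push g t = fac μ → ∃ r, mapDomain (pushAtom g) r = μ ∧ fac r = t := by
  have hadd : ∀ μ ν : FreeExp ↥(BlockS (Set.range g)),
      (∀ t, push g t = fac μ → ∃ r, mapDomain (pushAtom g) r = μ ∧ fac r = t) →
      (∀ t, push g t = fac ν → ∃ r, mapDomain (pushAtom g) r = ν ∧ fac r = t) →
      ∀ t, push g t = fac (μ + ν) → ∃ r, mapDomain (pushAtom g) r = μ + ν ∧ fac r = t := by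
    intro μ ν hμ hν t ht
    rw [fac_add] at ht
    obtain ⟨t₁, t₂, rfl, h1, h2⟩ := push_split g ht
    obtain ⟨r₁, hr₁, rfl⟩ := hμ t₁ h1
    obtain ⟨r₂, hr₂, rfl⟩ := hν t₂ h2
    exact ⟨r₁ + r₂, by rw [mapDomain_add, hr₁, hr₂], fac_add _ _⟩
  have hzero : ∀ t, push g t = fac (0 : FreeExp ↥(BlockS (Set.range g))) →
      ∃ r, mapDomain (pushAtom g) r = 0 ∧ fac r = t := by
    intro t ht
    exact ⟨0, mapDomain_zero, (push_eq_zero g ht).symm⟩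
  induction μ using Finsupp.induction_linear with
  | zero => exact hzero
  | add μ ν hμ hν => exact hadd μ ν hμ hν
  | single a n =>
    induction n with
    | zero => rw [Finsupp.single_zero]; exact hzero
    | succ n ih =>
      rw [Finsupp.single_add]
      refine hadd _ _ ih fun t ht => ?_
      rw [fac_single_s13] at ht
      refine ⟨single ⟨t, (isAtm_push g t).mp (ht ▸ a.2)⟩ 1, ?_, fac_single_s13 _⟩
      rw [mapDomain_single]
      congr 1
      exact Subtype.ext ht

/-- The content of an atom of `ℬ(g)`, as a plain vector. -/
def atomVec (u : ↥(Atoms ↥(BlockT g))) : Fin m → ℕ := u.1.1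

lemma atomVec_injective : Function.Injective (atomVec g) :=
  Subtype.val_injective.comp Subtype.val_injective

lemma fac_apply (z : FreeExp ↥(BlockT g)) (i : Fin m) :
    (fac z : ↥(BlockT g)).1 i = content (atomVec g) z i := by
  rw [fac, content, Finsupp.sum, Finsupp.sum, AddSubmonoid.coe_finsetSum, Finset.sum_apply]
  rfl

lemma fac_eq_iff (z y : FreeExp ↥(BlockT g)) :
    fac z = fac y ↔ ∀ i, content (atomVec g) z i = content (atomVec g) y i := by
  simp only [← fac_apply]
  rw [Subtype.ext_iff, funext_iff]

lemma sum_fibre_eq (u v : ↥(Atoms ↥(BlockT g))) (h : pushAtom g u = pushAtom g v)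
    (s : Finset (Fin m)) (x : G) (hs : ∀ i, i ∈ s ↔ g i = x) :
    ∑ i ∈ s, atomVec g u i = ∑ i ∈ s, atomVec g v i := by
  classical
  rcases s.eq_empty_or_nonempty with rfl | ⟨i₀, hi₀⟩
  · simp
  have key : ∀ w : ↥(Atoms ↥(BlockT g)),
      (push g w : Set.range g →₀ ℕ) ⟨x, i₀, (hs i₀).mp hi₀⟩ = ∑ i ∈ s, atomVec g w i := by
    intro w
    rw [push_val, fibreSum, mapDomain, Finsupp.sum_fintype _ _ (by simp), Finsupp.finsetSum_apply,
      ← Finset.sum_filter_add_sum_filter_not Finset.univ (· ∈ s)]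
    rw [Finset.sum_eq_zero (s := Finset.univ.filter fun i => ¬ i ∈ s), add_zero,
      Finset.filter_mem_eq_inter, Finset.univ_inter]
    · refine Finset.sum_congr rfl fun i hi => ?_
      have : Set.rangeFactorization g i = ⟨x, i₀, (hs i₀).mp hi₀⟩ := Subtype.ext ((hs i).mp hi)
      rw [this, Finsupp.single_eq_same]
      rfl
    · intro i hi
      refine Finsupp.single_eq_of_ne' fun h' => ?_
      exact (Finset.mem_filter.mp hi).2 ((hs i).mpr (congrArg Subtype.val h'))
  have h' : push g u = push g v := congrArg Subtype.val h
  rw [← key u, ← key v, h']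

/-- Exchanging a label for another one in the same fibre turns an atom into an atom. -/
lemma exists_atom_swap (u : ↥(Atoms ↥(BlockT g))) (i j : Fin m) (hg : g i = g j)
    (hj : 0 < atomVec g u j) : ∃ u', pushAtom g u' = pushAtom g u ∧
      ∀ k, atomVec g u' k + (if k = j then 1 else 0) = atomVec g u k + (if k = i then 1 else 0) := by
  classical
  set F : Fin m → ℕ := fun k => atomVec g u k + (if k = i then 1 else 0) - (if k = j then 1 else 0)
    with hF
  have hk : ∀ k, F k + (if k = j then 1 else 0) = atomVec g u k + (if k = i then 1 else 0) := by
    intro k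
    simp only [hF]
    by_cases hkj : k = j
    · subst hkj
      rw [if_pos rfl]
      omega
    · rw [if_neg hkj]
      omega
  have hsingle : ∀ l : Fin m, equivFunOnFinite.symm (fun k => if k = l then 1 else 0)
      = single l 1 := by
    intro l
    ext k
    simp [Finsupp.single_apply, eq_comm]
  have hfib : fibreSum g F = fibreSum g (atomVec g u) := by
    have h1 : F + (fun k => if k = j then 1 else 0)
        = atomVec g u + (fun k => if k = i then 1 else 0) := funext hk
    have h2 := congrArg (fibreSum g) h1
    rw [fibreSum_add, fibreSum_add] at h2
    have h3 : fibreSum g (fun k => if k = j then 1 else 0)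
        = fibreSum g (fun k => if k = i then 1 else 0) := by
      rw [fibreSum, fibreSum, hsingle, hsingle, mapDomain_single, mapDomain_single]
      congr 1
      exact Subtype.ext hg.symm
    rw [h3] at h2
    exact add_right_cancel h2
  have hFT : F ∈ BlockT g := by
    rw [← fibreSum_mem, hfib, fibreSum_mem]
    exact u.1.2
  have hpush : push g ⟨F, hFT⟩ = push g u := Subtype.ext hfib
  refine ⟨⟨⟨F, hFT⟩, (isAtm_push g _).mp (by rw [hpush]; exact (isAtm_push g _).mpr u.2)⟩,
    Subtype.ext hpush, hk⟩

/-- By Dickson's lemma, since the atoms of `ℬ(g)` form an antichain in `ℕ^m`. -/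
lemma finite_atoms : Finite ↥(Atoms ↥(BlockT g)) := by
  have hanti : IsAntichain (· ≤ ·) (Set.range (atomVec g)) := by
    rintro _ ⟨u, rfl⟩ _ ⟨v, rfl⟩ hne hle
    obtain ⟨F, hF⟩ := exists_add_of_le hle
    have hFT : F ∈ BlockT g := by
      have hu : ∏ i, g i ^ atomVec g u i = 1 := u.1.2
      have hv : ∏ i, g i ^ atomVec g v i = 1 := v.1.2
      rw [hF] at hv
      simp only [Pi.add_apply, pow_add, Finset.prod_mul_distrib, hu, one_mul] at hv
      exact hv
    rcases v.2.2 u.1 ⟨F, hFT⟩ (Subtype.ext hF) with h | h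
    · exact u.2.1 h
    · refine hne ?_
      rw [hF, show F = 0 from congrArg Subtype.val h, add_zero]
  have := (WellQuasiOrderedLE.finite_of_isAntichain hanti).to_subtype
  exact Finite.of_injective (Set.rangeFactorization (atomVec g))
    (Set.rangeFactorization_injective.mpr (atomVec_injective g))

/-- The key by which atoms of `ℬ(g)` are ordered: first the image atom, in an arbitrary linear
order on the atoms of `ℬ(supp g)`, then the content vector, where more content at the first
difference makes the atom smaller. -/
noncomputable def atomKey (u : ↥(Atoms ↥(BlockT g))) : Cardinal ×ₗ (Lex (Fin m → ℕ))ᵒᵈ :=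
  toLex (embeddingToCardinal (pushAtom g u), OrderDual.toDual (toLex (atomVec g u)))

lemma atomKey_injective : Function.Injective (atomKey g) := by
  intro u v h
  have h1 := congrArg (fun k => (ofLex k).2) h
  exact atomVec_injective g (toLex_inj.mp (OrderDual.toDual.injective h1))

/-- The linear order on the atoms of `ℬ(g)` given by `atomKey`. It is not an instance, because
the atoms already carry the partial order inherited from `ℕ^m`. -/
noncomputable abbrev atomOrder : LinearOrder ↥(Atoms ↥(BlockT g)) :=
  LinearOrder.lift' (atomKey g) (atomKey_injective g)

lemma atomKey_lt (u v : ↥(Atoms ↥(BlockT g))) (h : pushAtom g u = pushAtom g v) :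
    atomKey g u < atomKey g v ↔
      ∃ i, (∀ k < i, atomVec g u k = atomVec g v k) ∧ atomVec g v i < atomVec g u i := by
  rw [Prod.Lex.lt_iff]
  have h1 : (ofLex (atomKey g u)).1 = (ofLex (atomKey g v)).1 := by
    show embeddingToCardinal (pushAtom g u) = embeddingToCardinal (pushAtom g v)
    rw [h]
  simp only [h1, lt_irrefl, false_or, true_and]
  show (∃ i, (∀ k < i, atomVec g v k = atomVec g u k) ∧ atomVec g v i < atomVec g u i) ↔ _
  simp only [eq_comm]

lemma atomKey_conv (u v w : ↥(Atoms ↥(BlockT g))) (huv : atomKey g u ≤ atomKey g v)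
    (hvw : atomKey g v ≤ atomKey g w) (h : pushAtom g u = pushAtom g w) :
    pushAtom g u = pushAtom g v := by
  have h1 : embeddingToCardinal (pushAtom g u) ≤ embeddingToCardinal (pushAtom g v) :=
    Prod.Lex.monotone_fst _ _ huv
  have h2 : embeddingToCardinal (pushAtom g v) ≤ embeddingToCardinal (pushAtom g w) :=
    Prod.Lex.monotone_fst _ _ hvw
  rw [← h] at h2
  exact embeddingToCardinal.injective (le_antisymm h1 h2)

end Transfer

/-- Corollary 5.7: if `ℬ(supp g)` has a quadratic Gröbner system, then
so does `ℬ(g)`. -/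
theorem quadratic_groebner_block (G : Type) [CommGroup G] (m : ℕ) (g : Fin m → G)
    (h : ∃ (lt : FreeExp ↥(BlockS (Set.range g)) → FreeExp ↥(BlockS (Set.range g)) → Prop)
      (Λ : Set (FreeExp ↥(BlockS (Set.range g)) × FreeExp ↥(BlockS (Set.range g)))),
      IsAdmissible lt ∧ IsGroebnerSystem lt (defCon ↥(BlockS (Set.range g))) Λ ∧
      ∀ p ∈ Λ, degE p.1 ≤ 2 ∧ degE p.2 ≤ 2) :
    ∃ (lt : FreeExp ↥(BlockT g) → FreeExp ↥(BlockT g) → Prop)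
      (Λ : Set (FreeExp ↥(BlockT g) × FreeExp ↥(BlockT g))),
      IsAdmissible lt ∧ IsGroebnerSystem lt (defCon ↥(BlockT g)) Λ ∧
      ∀ p ∈ Λ, degE p.1 ≤ 2 ∧ degE p.2 ≤ 2 := by
  classical
  obtain ⟨lt, Λ, hadm, ⟨-, hΛ, hmin⟩, hdeg⟩ := h
  let lt' : FreeExp ↥(BlockT g) → FreeExp ↥(BlockT g) → Prop :=
    @liftLt _ _ (atomOrder g) (pushAtom g) lt
  have hadm' : IsAdmissible lt' := @isAdmissible_liftLt _ _ (atomOrder g) (pushAtom g) lt hadm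
  have hfin := finite_atoms g
  -- Take all decreasing relations between vectors of degree at most two.
  refine ⟨lt', {p | degE p.1 ≤ 2 ∧ degE p.2 ≤ 2 ∧ fac p.1 = fac p.2 ∧ lt' p.2 p.1}, hadm',
    ⟨?_, fun p hp => ⟨hp.2.2.1, hp.2.2.2⟩, ?_⟩, fun p hp => ⟨hp.1, hp.2.1⟩⟩
  · exact ((finite_degE_le 2).prod (finite_degE_le 2)).subset fun p hp => ⟨hp.1, hp.2.1⟩
  intro z hz y hzy
  have hzy : fac z = fac y := hzy
  -- A pair of `Λ` dividing the image of `z` would lift to a relation dividing `z`.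
  have hirr : ∀ p ∈ Λ, ¬ ∃ u, Finsupp.mapDomain (pushAtom g) z = p.1 + u := by
    rintro ⟨a, b⟩ hp ⟨c, hc⟩
    obtain ⟨l, n, rfl, rfl, -⟩ := exists_split_of_mapDomain_eq_add _ _ _ _ hc
    have hab : fac (Finsupp.mapDomain (pushAtom g) l) = fac b := (hΛ _ hp).1
    obtain ⟨r, rfl, hr⟩ := exists_lift_fac g b (fac l) (by rw [← fac_mapDomain_pushAtom, hab])
    have hd := hdeg _ hp
    simp only [degE_mapDomain] at hd
    exact hz (l, r) ⟨hd.1, hd.2, hr.symm, Or.inl (hΛ _ hp).2⟩ ⟨n, rfl⟩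
  have hzy' : fac (Finsupp.mapDomain (pushAtom g) z) = fac (Finsupp.mapDomain (pushAtom g) y) := by
    rw [fac_mapDomain_pushAtom, fac_mapDomain_pushAtom, hzy]
  rcases hmin _ hirr _ hzy' with hκ | hκ
  swap
  · exact Or.inr (Or.inl hκ)
  rcases hadm'.1 z y with h | h | h
  · exact Or.inr h
  · exact Or.inl h
  exfalso
  rcases h with h | ⟨-, h⟩
  · rw [hκ] at h
    exact hadm.2.2.1 _ h
  obtain ⟨u, v, u', v', hle, hu, hv, he, hlt⟩ :=
    @exists_improvable_pair _ _ _ (atomOrder g) m g (pushAtom g) (atomVec g)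
      (sum_fibre_eq g) (atomKey_lt g) (atomKey_conv g) (exists_atom_swap g) z y hκ
      ((fac_eq_iff g z y).mp hzy) h
  refine hz (Finsupp.single u 1 + Finsupp.single v 1, Finsupp.single u' 1 + Finsupp.single v' 1)
    ⟨?_, ?_, ?_, Or.inr ⟨?_, hlt⟩⟩ (exists_add_of_le hle)
  · simp [degE_add, degE_single]
  · simp [degE_add, degE_single]
  · rw [fac_eq_iff]
    intro i
    simp only [content_add, content_single, he]
  · simp only [Finsupp.mapDomain_add, Finsupp.mapDomain_single, hu, hv]
end
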